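/- arXiv:2410.09878 — 4 statements merged into one kernel-verified Lean document; each statement's English description precedes it below -/
import Mathlib

section
/- Let n be a positive integer, let Z_1, ..., Z_{n+1} be exchangeable real-valued random variables on a probability space, and let α ∈ (0,1). Set k := ⌊α(n+1)⌋ and assume 1 ≤ k ≤ n. Let τ be the k-th smallest value among Z_1, ..., Z_n. Then P(Z_{n+1} ≥ τ) ≥ 1 − α. -/
open MeasureTheory

/-- The `k`-th smallest value (k-th order statistic) of the tuple `z`:
the `k`-th entry of its nondecreasing rearrangement. -/
noncomputable def kthSmallest {n : ℕ} (z : Fin n → ℝ) (k : ℕ) : ℝ :=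
  (List.insertionSort (· ≤ ·) (List.ofFn z)).getD (k - 1) 0

/-!
The `k`-th smallest of `z₁, …, zₙ` is at most `zₙ₊₁` exactly when the rank of `zₙ₊₁` among
`z₁, …, zₙ₊₁`, with ties counted in its favour, exceeds `k`. At most `k` of the `n + 1` indices
have rank at most `k`. Since permutations preserving the law carry `n + 1` to every other index,
each index is equally likely to be one of them, so `zₙ₊₁` has rank at most `k` with probability at
most `k / (n + 1) ≤ α`.
-/

open scoped Finset

section OrderStatistics

lemma card_filter_comp_equiv {ι κ : Type*} [Fintype ι] [Fintype κ] (e : κ ≃ ι) (p : ι → Prop)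
    [DecidablePred p] : #{i | p (e i)} = #{i | p i} :=
  Finset.card_equiv e (by simp)

lemma insertionSort_ofFn_eq_ofFn_comp_sort {β : Type*} [LinearOrder β] {n : ℕ} (z : Fin n → β) :
    (List.ofFn z).insertionSort (· ≤ ·) = List.ofFn (z ∘ Tuple.sort z) :=
  have hperm : ((List.ofFn z).insertionSort (· ≤ ·)).Perm (List.ofFn (z ∘ Tuple.sort z)) :=
    (List.perm_insertionSort _ _).trans ((Tuple.sort z).ofFn_comp_perm z).symm
  hperm.eq_of_pairwise' (List.pairwise_insertionSort _ _)
    (Tuple.monotone_sort z).sortedLE_ofFn.pairwise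

lemma kthSmallest_eq_apply_sort {n k : ℕ} (z : Fin n → ℝ) (hk : k - 1 < n) :
    kthSmallest z k = z (Tuple.sort z ⟨k - 1, hk⟩) := by
  rw [kthSmallest, insertionSort_ofFn_eq_ofFn_comp_sort, List.getD_eq_getElem _ _ (by simpa),
    List.getElem_ofFn, Function.comp_apply]

lemma kthSmallest_le_iff {n k : ℕ} {z : Fin n → ℝ} {x : ℝ} (hk₁ : 1 ≤ k) (hkn : k ≤ n) :
    kthSmallest z k ≤ x ↔ k ≤ #{i | z i ≤ x} := by
  have hsort := Tuple.lt_card_le_iff_apply_le_of_monotone (j := ⟨k - 1, by omega⟩) (a := x)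
    (Tuple.monotone_sort z)
  simp only [Function.comp_apply, card_filter_comp_equiv (Tuple.sort z) (z · ≤ x)] at hsort
  rw [kthSmallest_eq_apply_sort z (by omega), ← hsort]
  omega

end OrderStatistics

/-- The rank of the entry `z i` in the family `z`, counted from `1` at the smallest entry; tied
entries all receive the largest of the ranks they occupy. -/
def upperRank {ι β : Type*} [Fintype ι] [LE β] [DecidableLE β] (z : ι → β) (i : ι) : ℕ :=
  #{j | z j ≤ z i}

section UpperRank

lemma upperRank_comp_equiv {ι κ β : Type*} [Fintype ι] [Fintype κ] [LE β] [DecidableLE β]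
    (z : ι → β) (e : κ ≃ ι) (i : κ) : upperRank (z ∘ e) i = upperRank z (e i) :=
  card_filter_comp_equiv e (z · ≤ z (e i))

lemma upperRank_last {β : Type*} [Preorder β] [DecidableLE β] {n : ℕ} (z : Fin (n + 1) → β) :
    upperRank z (Fin.last n) = #{i : Fin n | z i.castSucc ≤ z (Fin.last n)} + 1 := by
  rw [upperRank, Finset.card_filter, Fin.sum_univ_castSucc, ← Finset.card_filter, if_pos le_rfl]

lemma kthSmallest_castSucc_le_last_iff {n k : ℕ} {z : Fin (n + 1) → ℝ}
    (hk₁ : 1 ≤ k) (hkn : k ≤ n) :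
    kthSmallest (fun i : Fin n ↦ z i.castSucc) k ≤ z (Fin.last n) ↔
      k < upperRank z (Fin.last n) := by
  rw [kthSmallest_le_iff hk₁ hkn, upperRank_last, Nat.lt_succ_iff]

lemma card_upperRank_le {ι β : Type*} [Fintype ι] [LinearOrder β] (z : ι → β) (k : ℕ) :
    #{i | upperRank z i ≤ k} ≤ k := by
  obtain hempty | hne := Finset.eq_empty_or_nonempty ({i | upperRank z i ≤ k} : Finset ι)
  · simp [hempty]
  · obtain ⟨m, hm, hmax⟩ := Finset.exists_max_image _ z hne
    calc #{i | upperRank z i ≤ k} ≤ upperRank z m :=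
          Finset.card_le_card fun i hi ↦ by simpa using hmax i hi
      _ ≤ k := by simpa using hm

end UpperRank

lemma sum_measure_le_mul_measure_univ {ι Ω : Type*} [Fintype ι] [MeasurableSpace Ω]
    {μ : Measure Ω} {s : ι → Set Ω} [∀ ω, DecidablePred (ω ∈ s ·)] {k : ℕ}
    (hs : ∀ i, NullMeasurableSet (s i) μ) (hk : ∀ ω, #{i | ω ∈ s i} ≤ k) :
    ∑ i, μ (s i) ≤ k * μ Set.univ :=
  calc ∑ i, μ (s i) = ∫⁻ ω, ∑ i, (s i).indicator 1 ω ∂μ := by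
        rw [lintegral_finsetSum' (f := fun i ↦ (s i).indicator 1) _ fun i _ ↦
          aemeasurable_one.indicator₀ (hs i)]
        simp only [lintegral_indicator_one₀ (hs _)]
    _ = ∫⁻ ω, (#{i | ω ∈ s i} : ENNReal) ∂μ := by simp [Set.indicator_apply]
    _ ≤ ∫⁻ _, k ∂μ := lintegral_mono fun ω ↦ Nat.cast_le.2 (hk ω)
    _ = k * μ Set.univ := lintegral_const _

section InvariantLaw

variable {ι β : Type*} [Fintype ι] [LinearOrder β] [TopologicalSpace β] [OrderClosedTopology β]
  [SecondCountableTopology β] [MeasurableSpace β] [OpensMeasurableSpace β]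

lemma measurable_upperRank (i : ι) : Measurable fun z : ι → β ↦ upperRank z i := by
  simp only [upperRank, Finset.card_filter]
  exact Finset.measurable_sum _ fun j _ ↦
    .ite (measurableSet_le (measurable_pi_apply j) (measurable_pi_apply i))
      measurable_const measurable_const

lemma measurableSet_upperRank_le (i : ι) (k : ℕ) :
    MeasurableSet {z : ι → β | upperRank z i ≤ k} :=
  measurable_upperRank i measurableSet_Iic

variable {ν : Measure (ι → β)} {i₀ : ι}

lemma card_mul_measure_upperRank_le
    (hν : ∀ i, ∃ σ : Equiv.Perm ι, σ i₀ = i ∧ MeasurePreserving (· ∘ σ) ν ν) (k : ℕ) :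
    Fintype.card ι * ν {z | upperRank z i₀ ≤ k} ≤ k * ν Set.univ := by
  have heq (i : ι) : ν {z | upperRank z i ≤ k} = ν {z | upperRank z i₀ ≤ k} := by
    obtain ⟨σ, rfl, hσ⟩ := hν i
    simpa only [Set.preimage_ofPred_eq, upperRank_comp_equiv] using
      hσ.measure_preimage (measurableSet_upperRank_le i₀ k).nullMeasurableSet
  calc Fintype.card ι * ν {z | upperRank z i₀ ≤ k} = ∑ i, ν {z | upperRank z i ≤ k} := by
        simp [heq]
    _ ≤ k * ν Set.univ :=
        sum_measure_le_mul_measure_univ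
          (fun i ↦ (measurableSet_upperRank_le i k).nullMeasurableSet)
          fun z ↦ card_upperRank_le z k

lemma ofReal_one_sub_le_measure_lt_upperRank [IsProbabilityMeasure ν]
    (hν : ∀ i, ∃ σ : Equiv.Perm ι, σ i₀ = i ∧ MeasurePreserving (· ∘ σ) ν ν) {k : ℕ} {α : ℝ}
    (hk : k ≤ α * Fintype.card ι) :
    ENNReal.ofReal (1 - α) ≤ ν {z | k < upperRank z i₀} := by
  have hcard : (0 : ℝ) < Fintype.card ι := Nat.cast_pos.2 (Fintype.card_pos_iff.2 ⟨i₀⟩)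
  have hmul : Fintype.card ι * ν.real {z | upperRank z i₀ ≤ k} ≤ k := by
    simpa [measureReal_def] using
      ENNReal.toReal_mono (by simp) (card_mul_measure_upperRank_le hν k)
  have hα : ν.real {z | upperRank z i₀ ≤ k} ≤ α := le_of_mul_le_mul_left (by linarith) hcard
  have hcompl : {z : ι → β | k < upperRank z i₀} = {z | upperRank z i₀ ≤ k}ᶜ := by
    ext; simp
  apply ENNReal.ofReal_le_of_le_toReal
  rw [hcompl, ← measureReal_def, probReal_compl_eq_one_sub (measurableSet_upperRank_le i₀ k)]
  linarith

end InvariantLaw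

theorem conformal_coverage_general {Ω : Type*} [MeasurableSpace Ω] {μ : Measure Ω}
    [IsProbabilityMeasure μ] {n : ℕ} {Z : Fin (n + 1) → Ω → ℝ} (hZ : ∀ i, AEMeasurable (Z i) μ)
    (hinv : ∀ j, ∃ σ : Equiv.Perm (Fin (n + 1)), σ (Fin.last n) = j ∧
      μ.map (fun ω i ↦ Z (σ i) ω) = μ.map (fun ω i ↦ Z i ω))
    {α : ℝ} {k : ℕ} (hk : k ≤ α * (n + 1)) (hk₁ : 1 ≤ k) (hkn : k ≤ n) :
    ENNReal.ofReal (1 - α) ≤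
      μ {ω | kthSmallest (fun i : Fin n ↦ Z i.castSucc ω) k ≤ Z (Fin.last n) ω} := by
  have hZ_joint : AEMeasurable (fun ω i ↦ Z i ω) μ := aemeasurable_pi_lambda _ hZ
  have := Measure.isProbabilityMeasure_map hZ_joint
  have hlaw (j) : ∃ σ : Equiv.Perm (Fin (n + 1)), σ (Fin.last n) = j ∧
      MeasurePreserving (· ∘ σ) (μ.map fun ω i ↦ Z i ω) (μ.map fun ω i ↦ Z i ω) := by
    obtain ⟨σ, hσ, hσZ⟩ := hinv j
    have hcomp : Measurable fun z : Fin (n + 1) → ℝ ↦ z ∘ σ := by fun_prop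
    exact ⟨σ, hσ, hcomp,
      (AEMeasurable.map_map_of_aemeasurable hcomp.aemeasurable hZ_joint).trans hσZ⟩
  calc ENNReal.ofReal (1 - α)
      ≤ μ.map (fun ω i ↦ Z i ω) {z | k < upperRank z (Fin.last n)} :=
        ofReal_one_sub_le_measure_lt_upperRank hlaw (by simpa using hk)
    _ = μ {ω | k < upperRank (fun i ↦ Z i ω) (Fin.last n)} :=
        Measure.map_apply_of_aemeasurable hZ_joint (measurable_upperRank _ measurableSet_Ioi)
    _ = μ {ω | kthSmallest (fun i : Fin n ↦ Z i.castSucc ω) k ≤ Z (Fin.last n) ω} :=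
        congrArg μ <| Set.ext fun ω ↦
          (kthSmallest_castSucc_le_last_iff (z := fun i ↦ Z i ω) hk₁ hkn).symm

/-- Split conformal prediction coverage guarantee: if `Z 0, …, Z n` are exchangeable
real random variables, `α ∈ (0,1)`, `k = ⌊α (n+1)⌋` with `1 ≤ k ≤ n`, and `τ` is the
`k`-th smallest of the first `n` variables, then `P(Z (n+1) ≥ τ) ≥ 1 - α`. -/
theorem conformal_coverage {Ω : Type*} [MeasurableSpace Ω] (μ : Measure Ω)
    [IsProbabilityMeasure μ]
    (n : ℕ) (hn : 0 < n) (Z : Fin (n + 1) → Ω → ℝ) (hZ : ∀ i, Measurable (Z i))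
    (hexch : ∀ σ : Equiv.Perm (Fin (n + 1)),
      Measure.map (fun ω => fun i => Z (σ i) ω) μ = Measure.map (fun ω => fun i => Z i ω) μ)
    (α : ℝ) (hα : α ∈ Set.Ioo (0 : ℝ) 1)
    (k : ℕ) (hk : (k : ℤ) = ⌊α * (n + 1)⌋) (hk1 : 1 ≤ k) (hkn : k ≤ n) :
    ENNReal.ofReal (1 - α) ≤
      μ {ω | kthSmallest (fun i : Fin n => Z i.castSucc ω) k ≤ Z (Fin.last n) ω} :=
  conformal_coverage_general (fun i ↦ (hZ i).aemeasurable)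
    (fun j ↦ ⟨.swap (Fin.last n) j, Equiv.swap_apply_left _ _, hexch _⟩)
    (by exact_mod_cast Int.le_floor.1 hk.le) hk1 hkn
end

section
/- Let α ∈ (0,1) and let k ≥ 1 be an integer. Let A_1, ..., A_k be mutually independent events on a probability space with P(A_i) ≥ 1 − α for each i. Let F be the cumulative distribution function of the binomial distribution Bin(k, 1−α), i.e., F(x) = Σ_{j=0}^{x} C(k,j)(1−α)^j α^{k−j} for x ∈ {0, ..., k}, and let τ̂(α) = max{x ∈ {0, ..., k} : F(x) ≤ α} (this maximum exists since F(0) = α^k ≤ α). Then P( Σ_{i=1}^{k} 1_{A_i} > τ̂(α) ) ≥ 1 − α. -/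
open MeasureTheory ProbabilityTheory

/-! The number of events that occur stochastically dominates `Bin(k, 1 - α)`. Adding one more event
`B` to the count replaces the lower tail `P(count < t + 1)` by the average of the tails at `t` and
`t + 1` with weights `P(B)` and `1 - P(B)`; the binomial tails obey the same recursion with weights
`1 - α` and `α` (Pascal's rule). Since tails increase in `t`, raising the weight of the smaller one
only lowers the average, so the comparison propagates by induction. At `τ` it bounds the probability
of missing the majority by `F τ ≤ α`. -/

open scoped unitInterval

lemma binomial_succ_real_singleton_succ (n j : ℕ) (p : I) :
    Bin(n + 1, p).real {j + 1} = p * Bin(n, p).real {j} + (1 - p) * Bin(n, p).real {j + 1} := by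
  simp only [binomial_real_singleton, Nat.choose_succ_succ', Nat.add_sub_add_right, Nat.cast_add]
  rcases lt_or_ge n (j + 1) with hnj | hjn
  · rw [Nat.choose_eq_zero_of_lt hnj]
    push_cast
    ring
  · rw [show n - j = n - (j + 1) + 1 by lia]
    ring

lemma binomial_real_Iio (n t : ℕ) (p : I) :
    Bin(n, p).real (Set.Iio t) = ∑ j ∈ Finset.range t, Bin(n, p).real {j} := by
  rw [sum_measureReal_singleton, Finset.coe_range]

lemma binomial_succ_real_Iio_succ (n t : ℕ) (p : I) :
    Bin(n + 1, p).real (Set.Iio (t + 1)) =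
      p * Bin(n, p).real (Set.Iio t) + (1 - p) * Bin(n, p).real (Set.Iio (t + 1)) := by
  have pascal_zero : Bin(n + 1, p).real {0} = (1 - p) * Bin(n, p).real {0} := by
    simp only [binomial_real_zero, pow_succ']
  simp only [binomial_real_Iio, Finset.sum_range_succ' _ t, binomial_succ_real_singleton_succ,
    pascal_zero, Finset.sum_add_distrib, ← Finset.mul_sum]
  ring

lemma binomial_symm_real_Iic (n x : ℕ) (α : I) :
    Bin(n, σ α).real (Set.Iic x) =
      ∑ j ∈ Finset.range (x + 1), (n.choose j : ℝ) * (1 - α) ^ j * α ^ (n - j) := by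
  rw [← Set.Iio_add_one_eq_Iic, binomial_real_Iio]
  simp only [binomial_real_singleton, unitInterval.coe_symm_eq, sub_sub_cancel]

section EventCount

variable {ι Ω : Type*} {A : ι → Set Ω} {s : Finset ι} {a : ι}

/-- The number of the events `A i`, `i ∈ s`, that occur at `ω`; for prediction sets, the number of
votes in favour of the true label. -/
noncomputable def eventCount (A : ι → Set Ω) (s : Finset ι) (ω : Ω) : ℕ :=
  ∑ i ∈ s, (A i).indicator (fun _ => (1 : ℕ)) ω

lemma eventCount_insert_of_mem [DecidableEq ι] (ha : a ∉ s) {ω : Ω} (hω : ω ∈ A a) :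
    eventCount A (insert a s) ω = eventCount A s ω + 1 := by
  rw [eventCount, Finset.sum_insert ha, Set.indicator_of_mem hω, add_comm, eventCount]

lemma eventCount_insert_of_notMem [DecidableEq ι] (ha : a ∉ s) {ω : Ω} (hω : ω ∉ A a) :
    eventCount A (insert a s) ω = eventCount A s ω := by
  rw [eventCount, Finset.sum_insert ha, Set.indicator_of_notMem hω, zero_add, eventCount]

variable [MeasurableSpace Ω] {μ : Measure Ω}

lemma measurable_eventCount (hA : ∀ i ∈ s, MeasurableSet (A i)) : Measurable (eventCount A s) :=
  Finset.measurable_sum _ fun i hi => measurable_const.indicator (hA i hi)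

lemma indepFun_eventCount_indicator (hA : ∀ i, MeasurableSet (A i)) (hindep : iIndepSet A μ)
    (ha : a ∉ s) : IndepFun (eventCount A s) ((A a).indicator fun _ => (1 : ℕ)) μ := by
  have h := hindep.iIndepFun_indicator (β := ℕ).indepFun_finsetSum_of_notMem
    (fun i => measurable_const.indicator (hA i)) ha
  rwa [Finset.sum_fn] at h

lemma measureReal_eventCount_lt_inter (hA : ∀ i, MeasurableSet (A i)) (hindep : iIndepSet A μ)
    (ha : a ∉ s) (t : ℕ) :
    μ.real ({ω | eventCount A s ω < t} ∩ A a) =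
      μ.real {ω | eventCount A s ω < t} * μ.real (A a) := by
  have preimage_one : (A a).indicator (fun _ => (1 : ℕ)) ⁻¹' {1} = A a := by
    ext ω
    simp
  have h := (indepFun_eventCount_indicator hA hindep ha).measure_inter_preimage_eq_mul
    (Set.Iio t) {1} measurableSet_Iio (measurableSet_singleton 1)
  rw [preimage_one] at h
  exact (congrArg ENNReal.toReal h).trans ENNReal.toReal_mul

lemma measureReal_eventCount_insert_lt_succ [DecidableEq ι] (hA : ∀ i, MeasurableSet (A i))
    (hindep : iIndepSet A μ) (ha : a ∉ s) (t : ℕ) :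
    μ.real {ω | eventCount A (insert a s) ω < t + 1} =
      μ.real (A a) * μ.real {ω | eventCount A s ω < t} +
        (1 - μ.real (A a)) * μ.real {ω | eventCount A s ω < t + 1} := by
  have := hindep.isProbabilityMeasure
  have inter_eq : {ω | eventCount A (insert a s) ω < t + 1} ∩ A a =
      {ω | eventCount A s ω < t} ∩ A a := by
    ext ω
    simp +contextual [eventCount_insert_of_mem ha]
  have sdiff_eq : {ω | eventCount A (insert a s) ω < t + 1} \ A a =
      {ω | eventCount A s ω < t + 1} \ A a := by
    ext ω
    simp +contextual [eventCount_insert_of_notMem ha]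
  have add_eq := measureReal_inter_add_sdiff (μ := μ) (s := {ω | eventCount A s ω < t + 1}) (hA a)
  rw [← measureReal_inter_add_sdiff (hA a), inter_eq, sdiff_eq]
  rw [measureReal_eventCount_lt_inter hA hindep ha] at add_eq ⊢
  linear_combination add_eq

lemma measureReal_eventCount_lt_le_binomial (hA : ∀ i, MeasurableSet (A i))
    (hindep : iIndepSet A μ) {p : I} (hp : ∀ i ∈ s, (p : ℝ) ≤ μ.real (A i)) (t : ℕ) :
    μ.real {ω | eventCount A s ω < t} ≤ Bin(s.card, p).real (Set.Iio t) := by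
  classical
  have := hindep.isProbabilityMeasure
  induction s using Finset.induction_on generalizing t with
  | empty => by_cases ht : 0 < t <;> simp [eventCount, binomial_zero, measureReal_def, ht]
  | insert a s ha ih =>
    rcases t with _ | t
    · simp
    replace ih := ih fun i hi => hp i (Finset.mem_insert_of_mem hi)
    have tail_mono : μ.real {ω | eventCount A s ω < t} ≤ μ.real {ω | eventCount A s ω < t + 1} :=
      measureReal_mono fun ω (hω : eventCount A s ω < t) => hω.trans t.lt_succ_self
    have weight_le : (p : ℝ) ≤ μ.real (A a) := hp a (Finset.mem_insert_self a s)
    calc μ.real {ω | eventCount A (insert a s) ω < t + 1}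
      _ = μ.real (A a) * μ.real {ω | eventCount A s ω < t} +
            (1 - μ.real (A a)) * μ.real {ω | eventCount A s ω < t + 1} :=
          measureReal_eventCount_insert_lt_succ hA hindep ha t
      _ ≤ p * μ.real {ω | eventCount A s ω < t} +
            (1 - p) * μ.real {ω | eventCount A s ω < t + 1} := by
          linear_combination mul_le_mul_of_nonneg_left tail_mono (sub_nonneg.2 weight_le)
      _ ≤ p * Bin(s.card, p).real (Set.Iio t) +
            (1 - p) * Bin(s.card, p).real (Set.Iio (t + 1)) :=
          add_le_add (mul_le_mul_of_nonneg_left (ih t) p.2.1)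
            (mul_le_mul_of_nonneg_left (ih (t + 1)) (sub_nonneg.2 p.2.2))
      _ = Bin((insert a s).card, p).real (Set.Iio (t + 1)) := by
          rw [Finset.card_insert_of_notMem ha, binomial_succ_real_Iio_succ]

theorem majority_coverage_general (hA : ∀ i, MeasurableSet (A i)) (hindep : iIndepSet A μ)
    {α : I} (hcov : ∀ i ∈ s, ENNReal.ofReal (1 - α) ≤ μ (A i))
    {τ : ℕ} (hτ : Bin(s.card, σ α).real (Set.Iic τ) ≤ α) :
    ENNReal.ofReal (1 - α) ≤ μ {ω | τ < eventCount A s ω} := by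
  have := hindep.isProbabilityMeasure
  have hcov_real : ∀ i ∈ s, (σ α : ℝ) ≤ μ.real (A i) := fun i hi =>
    (ENNReal.ofReal_le_iff_le_toReal (measure_ne_top μ _)).1 (hcov i hi)
  have miss_le : μ.real {ω | eventCount A s ω < τ + 1} ≤ α := by
    refine (measureReal_eventCount_lt_le_binomial hA hindep hcov_real (τ + 1)).trans ?_
    rwa [Set.Iio_add_one_eq_Iic]
  have majority_eq_compl : {ω | τ < eventCount A s ω} = {ω | eventCount A s ω < τ + 1}ᶜ := by
    ext ω
    simp
  rw [ENNReal.ofReal_le_iff_le_toReal (measure_ne_top μ _), ← measureReal_def, majority_eq_compl,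
    probReal_compl_eq_one_sub
      (measurableSet_lt (measurable_eventCount fun i _ => hA i) measurable_const)]
  exact sub_le_sub_left miss_le 1

end EventCount

/-- Coverage of majority prediction sets (Theorem 2): if `A 1, …, A k` are mutually
independent events each with probability at least `1 - α`, `F` is the CDF of the
binomial distribution `Bin(k, 1-α)` and `τ = max {x ∈ {0,…,k} : F x ≤ α}`, then the
probability that more than `τ` of the events occur is at least `1 - α`. -/
theorem majority_coverage {Ω : Type*} [MeasurableSpace Ω] (μ : Measure Ω)
    [IsProbabilityMeasure μ]
    (α : ℝ) (hα : α ∈ Set.Ioo (0 : ℝ) 1) (k : ℕ) (hk : 1 ≤ k)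
    (A : Fin k → Set Ω) (hAm : ∀ i, MeasurableSet (A i))
    (hindep : iIndepSet A μ)
    (hcov : ∀ i, ENNReal.ofReal (1 - α) ≤ μ (A i))
    (F : ℕ → ℝ)
    (hF : ∀ x, F x = ∑ j ∈ Finset.range (x + 1), (k.choose j : ℝ) * (1 - α) ^ j * α ^ (k - j))
    (τ : ℕ) (hτk : τ ≤ k) (hτle : F τ ≤ α) (hτmax : ∀ x ≤ k, F x ≤ α → x ≤ τ) :
    ENNReal.ofReal (1 - α) ≤
      μ {ω | τ < ∑ i, (A i).indicator (fun _ => (1 : ℕ)) ω} :=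
  majority_coverage_general (α := ⟨α, Set.Ioo_subset_Icc_self hα⟩) hAm hindep (fun i _ => hcov i)
    (by simpa only [Finset.card_univ, Fintype.card_fin, binomial_symm_real_Iic, ← hF] using hτle)
end

section
/- Let K ≥ 2, let π ∈ ℝ^K, let y be an index in {1, ..., K}, let δ > 0, and let j, j' be indices distinct from y. For an index m ≠ y define h(m) = e^{π_y − δ} / ( e^{π_y − δ} + e^{π_m + δ} + Σ_{i ∉ {y, m}} e^{π_i} ), the softmax score of y after transferring δ from coordinate y to coordinate m. If π_j ≥ π_{j'}, then h(j) ≤ h(j'). In particular, among all recipient coordinates m ≠ y, the resulting score of y is minimized by choosing m ∈ argmax_{m ≠ y} π_m. -/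
/-- The softmax score of coordinate `y` after transferring mass `δ` from coordinate `y`
to the recipient coordinate `m`. -/
noncomputable def recipientScore {K : ℕ} (π : Fin K → ℝ) (y : Fin K) (δ : ℝ) (m : Fin K) : ℝ :=
  Real.exp (π y - δ) /
    (Real.exp (π y - δ) + Real.exp (π m + δ) + ∑ i ∈ Finset.univ \ {y, m}, Real.exp (π i))

/-!
Moving `δ` from `y` to `m` multiplies `exp (π m)` by `exp δ`, that is, it adds
`(exp δ - 1) * exp (π m)` to the mass outside `y`. No other part of the score depends on the
recipient, and for `δ ≥ 0` this term grows with `π m`.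
-/

theorem add_sum_sdiff_pair {ι M : Type*} [DecidableEq ι] [AddCommMonoid M] (s : Finset ι)
    (f : ι → M) {a b : ι} (hb : b ∈ s) (hba : b ≠ a) :
    f b + ∑ i ∈ s \ {a, b}, f i = ∑ i ∈ s.erase a, f i := by
  rw [Finset.pair_comm, Finset.sdiff_insert, Finset.sdiff_singleton_eq_erase]
  exact Finset.add_sum_erase _ f (Finset.mem_erase.mpr ⟨hba, hb⟩)

section RecipientScore

variable {K : ℕ} {π : Fin K → ℝ} {y : Fin K} {δ : ℝ}

theorem recipientScore_eq_div {m : Fin K} (hm : m ≠ y) :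
    recipientScore π y δ m =
      Real.exp (π y - δ) /
        (Real.exp (π y - δ) + ∑ i ∈ Finset.univ.erase y, Real.exp (π i) +
          (Real.exp δ - 1) * Real.exp (π m)) := by
  rw [recipientScore, Real.exp_add,
    ← add_sum_sdiff_pair Finset.univ (fun i ↦ Real.exp (π i)) (Finset.mem_univ m) hm]
  congr 1
  ring

theorem recipientScore_le_recipientScore (hδ : 0 ≤ δ) {j j' : Fin K} (hj : j ≠ y) (hj' : j' ≠ y)
    (hord : π j' ≤ π j) : recipientScore π y δ j ≤ recipientScore π y δ j' := by
  have hgain : 0 ≤ Real.exp δ - 1 := sub_nonneg.mpr (Real.one_le_exp hδ)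
  rw [recipientScore_eq_div hj, recipientScore_eq_div hj']
  gcongr

end RecipientScore

/-- Recipient optimality (correctness of the greedy lower-bound Algorithm 4): transferring
`δ > 0` from `y` to a recipient coordinate with larger mass yields a smaller softmax score
of `y`; in particular the score of `y` is minimized by choosing a recipient of maximal
mass. -/
theorem recipient_optimality (K : ℕ) (hK : 2 ≤ K) (π : Fin K → ℝ) (y : Fin K)
    (δ : ℝ) (hδ : 0 < δ) (j j' : Fin K) (hj : j ≠ y) (hj' : j' ≠ y)
    (hord : π j' ≤ π j) :
    recipientScore π y δ j ≤ recipientScore π y δ j' ∧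
    ∀ m : Fin K, m ≠ y → (∀ m', m' ≠ y → π m' ≤ π m) →
      ∀ m', m' ≠ y → recipientScore π y δ m ≤ recipientScore π y δ m' := by
  refine ⟨recipientScore_le_recipientScore hδ.le hj hj' hord, ?_⟩
  intro m hm hmax m' hm'
  exact recipientScore_le_recipientScore hδ.le hm hm' (hmax m' hm')
end

section
/- Let Y be a finite set, let k and τ̂ be natural numbers with τ̂ < k, let r be a natural number, and let C_1, ..., C_k and C̃_1, ..., C̃_k be subsets of Y with |{i : C̃_i ≠ C_i}| ≤ r. Define the majority sets C^M = {y ∈ Y : |{i : y ∈ C_i}| > τ̂} and C̃^M = {y ∈ Y : |{i : y ∈ C̃_i}| > τ̂}. If min_{y ∈ C^M} |{i : y ∈ C_i}| − r > τ̂ (with the convention that the condition holds vacuously if C^M is empty), then C^M ⊆ C̃^M; that is, no class can be removed from the majority prediction set. -/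
section MajorityVote

variable {ι Y S : Type*} [Fintype ι] [Membership Y S] [∀ (y : Y) (s : S), Decidable (y ∈ s)]

/-- The support of the class `y`: the number of individual prediction sets `C i` that contain it.
The sets live in any type `S` with a membership relation, such as `Finset Y` or `Set Y`. -/
def voteCount (C : ι → S) (y : Y) : ℕ :=
  Finset.card {i | y ∈ C i}

/-- The majority prediction set `C^M`: the classes whose support exceeds the threshold `τ`. It is
a `Set`, so that the space of classes may be infinite. -/
def majoritySet (τ : ℕ) (C : ι → S) : Set Y :=
  {y | τ < voteCount C y}

theorem voteCount_le_voteCount_add_hammingDist [DecidableEq S] (C Ct : ι → S) (y : Y) :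
    voteCount C y ≤ voteCount Ct y + hammingDist Ct C := by
  classical
  have votes_subset : ({i | y ∈ C i} : Finset ι) ⊆
      ({i | y ∈ Ct i} : Finset ι) ∪ ({i | Ct i ≠ C i} : Finset ι) := by
    intro i hi
    simp only [Finset.mem_union, Finset.mem_filter_univ] at hi ⊢
    by_cases unaltered : Ct i = C i
    · exact .inl (unaltered ▸ hi)
    · exact .inr unaltered
  exact (Finset.card_le_card votes_subset).trans (Finset.card_union_le _ _)

theorem majority_coverage_reliability_general [DecidableEq S] {τ r : ℕ} {C Ct : ι → S}
    (hdiff : hammingDist Ct C ≤ r)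
    (hmin : ∀ y ∈ majoritySet τ C, τ < voteCount C y - r) :
    majoritySet τ C ⊆ majoritySet τ Ct := fun y hy => calc
  τ < voteCount C y - r := hmin y hy
  _ ≤ voteCount C y - hammingDist Ct C := Nat.sub_le_sub_left hdiff _
  _ ≤ voteCount Ct y :=
    Nat.sub_le_of_le_add (voteCount_le_voteCount_add_hammingDist C Ct y)

end MajorityVote

/-- Coverage reliability of majority prediction sets (Theorem 4, first half): if an
adversary alters at most `r` of the `k` individual prediction sets and for every class
of the majority set the support minus `r` still exceeds the threshold `τ` (vacuously if
the majority set is empty), then no class can be removed from the majority set. -/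
theorem majority_coverage_reliability {Y : Type*} [Fintype Y] [DecidableEq Y]
    (k τ : ℕ) (hτ : τ < k) (r : ℕ)
    (C Ct : Fin k → Finset Y)
    (hdiff : (Finset.univ.filter (fun i => Ct i ≠ C i)).card ≤ r)
    (CM CtM : Finset Y)
    (hCM : CM = Finset.univ.filter
      (fun y => τ < (Finset.univ.filter (fun i => y ∈ C i)).card))
    (hCtM : CtM = Finset.univ.filter
      (fun y => τ < (Finset.univ.filter (fun i => y ∈ Ct i)).card))
    (hmin : ∀ y ∈ CM, τ < (Finset.univ.filter (fun i => y ∈ C i)).card - r) :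
    CM ⊆ CtM := by
  simp only [hCM, hCtM, Finset.subset_iff, Finset.mem_filter_univ] at hmin ⊢
  exact majority_coverage_reliability_general hdiff hmin
end
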